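/- arXiv:2602.04479 — 3 statements merged into one kernel-verified Lean document; each statement's English description precedes it below -/
import Mathlib

section
/- Let G : ℝ^d → ℝ be convex and L-smooth (its gradient is L-Lipschitz), B ∈ ℝ^{s×d}, and b in the column space of B. Suppose G attains a global minimum over ℝ^d, let u* be a minimizer of G over {u : Bu = b}, let u⁰ ∈ ℝ^d satisfy ‖u⁰ − u*‖² ≤ R², and let ε > 0. Define the regularized function G^ν(u) = G(u) + (ν/2)‖u⁰ − u‖² with ν = ε/R², let u*_ν be the minimizer of G^ν over {u : Bu = b}, set D = G(u*) − min_u G(u) and δ = ε² / (32 (D + ε/2)(L + ε/R²)). Then every u ∈ ℝ^d with ‖u − u*_ν‖² ≤ δ satisfies G(u) − G(u*) ≤ ε and ‖Bu − b‖² ≤ δ · σ_max²(B). -/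
/-!
Write `v` for the regularized minimizer, `e = u - v` and `A = D + ε / 2`. Comparing `v` with `ustar`
in the regularized problem gives `G v ≤ G ustar + ε / 2`, hence `G v - G w ≤ A`.
Smoothness at `v` bounds `G u` by `G v + G'(v) e + (L / 2) ‖e‖²`. The linear term is controlled by
smoothness in the opposite direction: since `w` is a global minimizer,
`G w ≤ G (v - t e) ≤ G v - t G'(v) e + (L / 2) t² ‖e‖²`, and `t = 8 A / ε` yields
`G'(v) e ≤ ε / 4`, because `32 A L ‖e‖² ≤ ε²` by the choice of `δ`. The quadratic term is at most
`ε / 32`, which leaves a total below `ε`.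
The feasibility bound is `‖B e‖² ≤ σ_max²(B) ‖e‖²`.
-/

open Matrix
open scoped BigOperators

noncomputable section

/-- Squared Euclidean norm of a vector. -/
def sqnorm {ι : Type*} [Fintype ι] (v : ι → ℝ) : ℝ := ∑ i, (v i) ^ 2

/-- Squared largest singular value of a real matrix. -/
def sigmaMaxSq {ι κ : Type*} [Fintype ι] [Fintype κ] (M : Matrix ι κ ℝ) : ℝ :=
  sSup {r : ℝ | ∃ x : κ → ℝ, sqnorm x = 1 ∧ r = sqnorm (M.mulVec x)}

/-- Squared smallest positive singular value of a real matrix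
(infimum of `‖Mx‖²` over unit vectors orthogonal to `ker M`). -/
def sigmaMinPosSq {ι κ : Type*} [Fintype ι] [Fintype κ] (M : Matrix ι κ ℝ) : ℝ :=
  sInf {r : ℝ | ∃ x : κ → ℝ,
    (∀ y : κ → ℝ, M.mulVec y = 0 → x ⬝ᵥ y = 0) ∧ sqnorm x = 1 ∧ r = sqnorm (M.mulVec x)}

/-- Largest eigenvalue of a symmetric real matrix (Rayleigh quotient form). -/
def lamMax {ι : Type*} [Fintype ι] (M : Matrix ι ι ℝ) : ℝ :=
  sSup {r : ℝ | ∃ x : ι → ℝ, sqnorm x = 1 ∧ r = x ⬝ᵥ M.mulVec x}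

/-- Smallest positive eigenvalue of a symmetric PSD real matrix (Rayleigh quotient
over unit vectors orthogonal to the kernel). -/
def lamMinPos {ι : Type*} [Fintype ι] (M : Matrix ι ι ℝ) : ℝ :=
  sInf {r : ℝ | ∃ x : ι → ℝ,
    (∀ y : ι → ℝ, M.mulVec y = 0 → x ⬝ᵥ y = 0) ∧ sqnorm x = 1 ∧ r = x ⬝ᵥ M.mulVec x}

lemma sqnorm_nonneg {ι : Type*} [Fintype ι] (v : ι → ℝ) : 0 ≤ sqnorm v :=
  Finset.sum_nonneg fun i _ => sq_nonneg (v i)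

lemma sqnorm_smul {ι : Type*} [Fintype ι] (c : ℝ) (v : ι → ℝ) :
    sqnorm (c • v) = c ^ 2 * sqnorm v := by
  simp only [sqnorm, Pi.smul_apply, smul_eq_mul, mul_pow, Finset.mul_sum]

lemma sqnorm_zero {ι : Type*} [Fintype ι] : sqnorm (0 : ι → ℝ) = 0 := by
  simp [sqnorm]

lemma eq_zero_of_sqnorm_eq_zero {ι : Type*} [Fintype ι] {v : ι → ℝ} (h : sqnorm v = 0) :
    v = 0 := by
  funext i
  have h' := (Finset.sum_eq_zero_iff_of_nonneg fun i _ => sq_nonneg (v i)).1 h i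
    (Finset.mem_univ i)
  simpa using h'

/-- The operator norm is at most the Frobenius norm. -/
lemma sqnorm_mulVec_le_frobenius {ι κ : Type*} [Fintype ι] [Fintype κ] (M : Matrix ι κ ℝ)
    (x : κ → ℝ) : sqnorm (M.mulVec x) ≤ (∑ i, ∑ j, M i j ^ 2) * sqnorm x := by
  rw [Finset.sum_mul]
  exact Finset.sum_le_sum fun i _ => Finset.sum_mul_sq_le_sq_mul_sq Finset.univ (M i) x

lemma sigmaMaxSq_nonneg {ι κ : Type*} [Fintype ι] [Fintype κ] (M : Matrix ι κ ℝ) :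
    0 ≤ sigmaMaxSq M := by
  apply Real.sSup_nonneg
  rintro r ⟨x, -, rfl⟩
  exact sqnorm_nonneg _

lemma sqnorm_mulVec_le {ι κ : Type*} [Fintype ι] [Fintype κ] (M : Matrix ι κ ℝ)
    (x : κ → ℝ) : sqnorm (M.mulVec x) ≤ sqnorm x * sigmaMaxSq M := by
  rcases (sqnorm_nonneg x).eq_or_lt with h | h
  · rw [eq_zero_of_sqnorm_eq_zero h.symm]
    simp [sqnorm_zero]
  · have hc : (√(sqnorm x))⁻¹ ^ 2 = (sqnorm x)⁻¹ := by
      rw [inv_pow, Real.sq_sqrt h.le]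
    have hle : sqnorm (M.mulVec ((√(sqnorm x))⁻¹ • x)) ≤ sigmaMaxSq M := by
      refine le_csSup ⟨∑ i, ∑ j, M i j ^ 2, ?_⟩ ⟨_, ?_, rfl⟩
      · rintro r ⟨y, hy, rfl⟩
        simpa [hy] using sqnorm_mulVec_le_frobenius M y
      · rw [sqnorm_smul, hc, inv_mul_cancel₀ h.ne']
    rw [Matrix.mulVec_smul, sqnorm_smul, hc] at hle
    rwa [inv_mul_le_iff₀ h] at hle


/-- accuracy of the regularized problem (Lemma on regularization,
Theorem 1 case 2). -/
theorem regularized_convergence {d s : ℕ}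
    (G : (Fin d → ℝ) → ℝ) (L : ℝ)
    (hG_conv : ConvexOn ℝ Set.univ G)
    (hG_diff : Differentiable ℝ G)
    (hG_smooth : ∀ u u' : Fin d → ℝ,
      G u' - G u - fderiv ℝ G u (u' - u) ≤ L / 2 * sqnorm (u' - u))
    (B : Matrix (Fin s) (Fin d) ℝ) (b : Fin s → ℝ)
    (hb : ∃ z : Fin d → ℝ, B.mulVec z = b)
    -- G attains a global minimum over ℝ^d at w
    (w : Fin d → ℝ) (hw : ∀ u, G w ≤ G u)
    -- u* is a minimizer of G over {u : Bu = b}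
    (ustar : Fin d → ℝ) (hustar_feas : B.mulVec ustar = b)
    (hustar_min : ∀ u, B.mulVec u = b → G ustar ≤ G u)
    (u0 : Fin d → ℝ) (R : ℝ) (hRpos : 0 < R) (hR : sqnorm (u0 - ustar) ≤ R ^ 2)
    (ε : ℝ) (hε : 0 < ε)
    (ν : ℝ) (hν : ν = ε / R ^ 2)
    (Gν : (Fin d → ℝ) → ℝ) (hGν : ∀ u, Gν u = G u + ν / 2 * sqnorm (u0 - u))
    -- u*_ν is the minimizer of G^ν over {u : Bu = b}
    (ustarν : Fin d → ℝ) (hustarν_feas : B.mulVec ustarν = b)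
    (hustarν_min : ∀ u, B.mulVec u = b → Gν ustarν ≤ Gν u)
    (D : ℝ) (hD : D = G ustar - G w)
    (δ : ℝ) (hδ : δ = ε ^ 2 / (32 * (D + ε / 2) * (L + ε / R ^ 2))) :
    ∀ u : Fin d → ℝ, sqnorm (u - ustarν) ≤ δ →
      G u - G ustar ≤ ε ∧ sqnorm (B.mulVec u - b) ≤ δ * sigmaMaxSq B := by
  intro u hu
  have hq := sqnorm_nonneg (u - ustarν)
  constructor
  · have hR2 : 0 < R ^ 2 := by positivity
    have hνpos : 0 < ν := hν ▸ div_pos hε hR2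
    have hνR : ν * R ^ 2 = ε := by rw [hν]; field_simp
    have hv : G ustarν ≤ G ustar + ε / 2 := by
      have h := hustarν_min ustar hustar_feas
      rw [hGν, hGν] at h
      have h1 := mul_nonneg hνpos.le (sqnorm_nonneg (u0 - ustarν))
      have h2 := mul_le_mul_of_nonneg_left hR hνpos.le
      linarith
    obtain ⟨e, he⟩ : ∃ e, e = u - ustarν := ⟨_, rfl⟩
    rw [← he] at hu hq
    rcases hq.eq_or_lt with h0 | hpos
    · rw [eq_zero_of_sqnorm_eq_zero h0.symm] at he
      rw [sub_eq_zero.1 he.symm]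
      linarith
    · -- The sign of `L` is not assumed; it follows from smoothness at the minimizer `w`.
      have hL : 0 ≤ L := by
        have hfd : fderiv ℝ G w = 0 :=
          IsLocalMin.fderiv_eq_zero (Filter.Eventually.of_forall hw)
        have h := hG_smooth w (w + e)
        rw [hfd, add_sub_cancel_left, _root_.zero_apply] at h
        have h1 := hw (w + e)
        by_contra! hneg
        nlinarith [mul_neg_of_neg_of_pos hneg hpos]
      obtain ⟨A, hA⟩ : ∃ A, A = D + ε / 2 := ⟨_, rfl⟩
      have hApos : 0 < A := by linarith [hw ustar]
      rw [← hν, ← hA] at hδ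
      have hδ' : 32 * A * (L + ν) * δ = ε ^ 2 := by
        rw [hδ]
        have : L + ν ≠ 0 := by positivity
        field_simp
      have hδpos : 0 < δ := hpos.trans_le hu
      have hkey : 32 * A * (L * sqnorm e) ≤ ε ^ 2 := by
        have h1 : L * sqnorm e ≤ (L + ν) * δ :=
          mul_le_mul (by linarith) hu hq (by linarith)
        have h2 := mul_le_mul_of_nonneg_left h1 (by positivity : (0 : ℝ) ≤ 32 * A)
        linarith
      have hquad : L * sqnorm e ≤ ε / 16 := by
        have h1 : (16 * ε) * (L * sqnorm e) ≤ 32 * A * (L * sqnorm e) :=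
          mul_le_mul_of_nonneg_right (by linarith [hw ustar]) (by positivity)
        have h2 : (16 * ε) * (L * sqnorm e) ≤ (16 * ε) * (ε / 16) := by linarith
        exact le_of_mul_le_mul_left h2 (by positivity)
      have hlin : fderiv ℝ G ustarν e ≤ ε / 4 := by
        obtain ⟨t, ht⟩ : ∃ t, t = 8 * A / ε := ⟨_, rfl⟩
        have htpos : 0 < t := by rw [ht]; positivity
        have htε : t * ε = 8 * A := by rw [ht]; field_simp
        have h := hG_smooth ustarν (ustarν + (-t) • e)
        rw [add_sub_cancel_left, map_smul, sqnorm_smul, smul_eq_mul] at h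
        have h1 := hw (ustarν + (-t) • e)
        -- `t ^ 2 L ‖e‖² ≤ 2 A`, from `t * ε = 8 A` and `32 A L ‖e‖² ≤ ε ^ 2`.
        have h2 : t ^ 2 * (L * sqnorm e) ≤ 2 * A := by
          have h3 := mul_le_mul_of_nonneg_left hkey (sq_nonneg t)
          have h4 : t ^ 2 * ε ^ 2 = 64 * A ^ 2 := by rw [← mul_pow, htε]; ring
          have h5 : (32 * A) * (t ^ 2 * (L * sqnorm e)) ≤ (32 * A) * (2 * A) := by linarith
          exact le_of_mul_le_mul_left h5 (by positivity)
        have h6 : t * fderiv ℝ G ustarν e ≤ t * (ε / 4) := by linarith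
        exact le_of_mul_le_mul_left h6 htpos
      have h := hG_smooth ustarν u
      rw [← he] at h
      linarith
  · rw [← hustarν_feas, ← Matrix.mulVec_sub]
    exact (sqnorm_mulVec_le B _).trans
      (mul_le_mul_of_nonneg_right hu (sigmaMaxSq_nonneg B))
end
end

section
/- Let U ⊆ ℝ^d be convex, G : U → ℝ convex, B ∈ ℝ^{s×d}, b ∈ ℝ^s, and let u* minimize G over {u ∈ U : Bu = b}. Suppose there exists v* ∈ ℝ^s with ‖v*‖ ≤ R_dual for some R_dual > 0 such that G(u) + ⟨v*, Bu − b⟩ ≥ G(u*) for all u ∈ U. Let ε > 0, set r = 2 R_dual² / ε, and define the penalized function H_r(u) = G(u) + (r/2)‖Bu − b‖². If û ∈ U satisfies H_r(û) − inf_{u ∈ U} H_r(u) ≤ ε, then G(û) − G(u*) ≤ ε and ‖Bû − b‖ ≤ 2ε / R_dual. -/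
/-!
Write `t = ‖B û - b‖`. Comparing `û` with the feasible point `u*`, whose penalty vanishes, gives
`G û + (r/2) t² ≤ G u* + ε`; dropping the penalty yields the bound on the objective. The dual
inequality and Cauchy–Schwarz give `G u* ≤ G û + R t`, so `(r/2) t² ≤ ε + R t`. With
`r = 2 R² / ε` and `x = R t / ε` this reads `x² ≤ 1 + x`, which forces `x ≤ 2`.
-/

open Matrix
open scoped BigOperators

noncomputable section

lemma dotProduct_le_sqrt_sqnorm {ι : Type*} [Fintype ι] (v w : ι → ℝ) :
    v ⬝ᵥ w ≤ Real.sqrt (sqnorm v) * Real.sqrt (sqnorm w) :=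
  Real.sum_mul_le_sqrt_mul_sqrt Finset.univ v w

/-- penalization lemma. -/
theorem penalization {d s : ℕ}
    (U : Set (Fin d → ℝ)) (hU : Convex ℝ U)
    (G : (Fin d → ℝ) → ℝ) (hG_conv : ConvexOn ℝ U G)
    (B : Matrix (Fin s) (Fin d) ℝ) (b : Fin s → ℝ)
    -- u* minimizes G over {u ∈ U : Bu = b}
    (ustar : Fin d → ℝ) (hustar_mem : ustar ∈ U) (hustar_feas : B.mulVec ustar = b)
    (hustar_min : ∀ u ∈ U, B.mulVec u = b → G ustar ≤ G u)
    -- an optimal dual multiplier v* of norm at most R_dual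
    (Rdual : ℝ) (hRdual : 0 < Rdual)
    (vstar : Fin s → ℝ) (hvnorm : Real.sqrt (sqnorm vstar) ≤ Rdual)
    (hv : ∀ u ∈ U, G ustar ≤ G u + vstar ⬝ᵥ (B.mulVec u - b))
    (ε : ℝ) (hε : 0 < ε)
    (r : ℝ) (hr : r = 2 * Rdual ^ 2 / ε)
    (Hr : (Fin d → ℝ) → ℝ)
    (hHr : ∀ u, Hr u = G u + r / 2 * sqnorm (B.mulVec u - b))
    (uhat : Fin d → ℝ) (huhat : uhat ∈ U)
    -- H_r(û) − inf_{u ∈ U} H_r(u) ≤ ε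
    (hgap : ∀ u ∈ U, Hr uhat - Hr u ≤ ε) :
    G uhat - G ustar ≤ ε ∧ Real.sqrt (sqnorm (B.mulVec uhat - b)) ≤ 2 * ε / Rdual := by
  have hstar : Hr ustar = G ustar := by
    simp [hHr, hustar_feas, sqnorm]
  have hgap' := hgap ustar hustar_mem
  rw [hstar, hHr uhat] at hgap'
  have hsq := Real.sq_sqrt (sqnorm_nonneg (B.mulVec uhat - b))
  have hdual := hv uhat huhat
  have hcs := dotProduct_le_sqrt_sqnorm vstar (B.mulVec uhat - b)
  have ht := Real.sqrt_nonneg (sqnorm (B.mulVec uhat - b))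
  rw [← hsq] at hgap'
  generalize Real.sqrt (sqnorm (B.mulVec uhat - b)) = t at *
  have hRt := mul_le_mul_of_nonneg_right hvnorm ht
  have hrpos : 0 < r := by rw [hr]; positivity
  have hpen : 0 ≤ r / 2 * t ^ 2 := by positivity
  refine ⟨by linarith, ?_⟩
  have hquad : r / 2 * t ^ 2 ≤ ε + Rdual * t := by linarith
  have hscale : r / 2 * t ^ 2 * ε = (Rdual * t) ^ 2 := by
    rw [hr]; field_simp
  have hmul := mul_le_mul_of_nonneg_right hquad hε.le
  rw [hscale] at hmul
  rw [le_div_iff₀ hRdual]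
  -- If `y = R t` exceeded `2 ε`, then `y² - ε y - ε² = (y - 2 ε) (y + ε) + ε²` would be positive.
  nlinarith [mul_nonneg hRdual.le ht]
end
end

section
/- Let G : ℝ^d → ℝ be convex with all subgradients bounded in norm by M > 0, let B ∈ ℝ^{s×d} be a nonzero matrix, b in the column space of B, and let u* be a minimizer of G over {u : Bu = b}. Then there exists an optimal dual multiplier v* ∈ ℝ^s with ‖v*‖ ≤ M / σ_min+(B) such that G(u) + ⟨v*, Bu − b⟩ ≥ G(u*) for all u ∈ ℝ^d. -/
/-!
Optimality of `ustar` on the affine space `{u | B u = b}` yields a subgradient `g` of `G` at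
`ustar` that is orthogonal to `ker B` (`exists_subgradient_orthogonal_ker`, by separating the
strict epigraph of `G` from a horizontal flat). Since `(ker B)ᗮ = range (Bᵀ B)`, there is `x`
orthogonal to `ker B` with `Bᵀ B x = g` (`exists_gram_preimage`), and `-B x` is the multiplier:
the Lagrangian inequality is the subgradient inequality for `g`. For the norm bound,
`‖B x‖² = ⟨g, x⟩ ≤ ‖g‖ ‖x‖` while `σ ‖x‖ ≤ ‖B x‖` on `(ker B)ᗮ`, so `σ ‖B x‖ ≤ ‖g‖ ≤ M`.
Dividing by `σ` requires `σ > 0`, which is `sigmaMinPosSq_pos`.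
-/


open Matrix
open scoped BigOperators

noncomputable section

/-- Orthogonal decomposition along a subspace, phrased with the dot product on plain functions. -/
lemma exists_dotProduct_decomp {d : ℕ} (W : Submodule ℝ (Fin d → ℝ)) (x : Fin d → ℝ) :
    ∃ w ∈ W, ∃ r : Fin d → ℝ, x = w + r ∧ ∀ y ∈ W, r ⬝ᵥ y = 0 := by
  let e := WithLp.linearEquiv 2 ℝ (Fin d → ℝ)
  let W' : Submodule ℝ (EuclideanSpace ℝ (Fin d)) := W.comap e.toLinearMap
  obtain ⟨w, hw, r, hr, h⟩ := W'.exists_add_mem_mem_orthogonal (WithLp.toLp 2 x)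
  refine ⟨w.ofLp, hw, r.ofLp, congrArg WithLp.ofLp h, fun y hy => ?_⟩
  have := (Submodule.mem_orthogonal _ _).1 hr (WithLp.toLp 2 y) hy
  simpa [EuclideanSpace.inner_eq_star_dotProduct] using this

lemma sqnorm_eq_dotProduct {ι : Type*} [Fintype ι] (v : ι → ℝ) : sqnorm v = v ⬝ᵥ v := by
  simp [sqnorm, dotProduct, sq]

lemma sqnorm_eq_zero {ι : Type*} [Fintype ι] {v : ι → ℝ} : sqnorm v = 0 ↔ v = 0 := by
  rw [sqnorm_eq_dotProduct, dotProduct_self_eq_zero]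

lemma continuous_sqnorm {ι : Type*} [Fintype ι] : Continuous (sqnorm : (ι → ℝ) → ℝ) := by
  unfold sqnorm
  fun_prop

lemma exists_unit_scaling {ι : Type*} [Fintype ι] {x : ι → ℝ} (hx : x ≠ 0) :
    sqnorm ((Real.sqrt (sqnorm x))⁻¹ • x) = 1 := by
  have h : sqnorm x ≠ 0 := fun h => hx (sqnorm_eq_zero.1 h)
  rw [sqnorm_smul, inv_pow, Real.sq_sqrt (sqnorm_nonneg x), inv_mul_cancel₀ h]

lemma sigmaMinPosSq_mul_le {s d : ℕ} (B : Matrix (Fin s) (Fin d) ℝ) (x : Fin d → ℝ)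
    (hx : ∀ y, B.mulVec y = 0 → x ⬝ᵥ y = 0) :
    sigmaMinPosSq B * sqnorm x ≤ sqnorm (B.mulVec x) := by
  by_cases h0 : x = 0
  · simp [h0, sqnorm]
  have hpos : 0 < sqnorm x :=
    lt_of_le_of_ne (sqnorm_nonneg x) fun h => h0 (sqnorm_eq_zero.1 h.symm)
  have hle : sigmaMinPosSq B ≤ sqnorm (B.mulVec ((Real.sqrt (sqnorm x))⁻¹ • x)) := by
    refine csInf_le ⟨0, ?_⟩ ⟨_, fun y hy => ?_, exists_unit_scaling h0, rfl⟩
    · rintro _ ⟨z, -, -, rfl⟩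
      exact sqnorm_nonneg _
    · rw [smul_dotProduct, hx y hy, smul_zero]
  rw [mulVec_smul, sqnorm_smul, inv_pow, Real.sq_sqrt hpos.le] at hle
  calc sigmaMinPosSq B * sqnorm x
      ≤ ((sqnorm x)⁻¹ * sqnorm (B.mulVec x)) * sqnorm x := by gcongr
    _ = sqnorm (B.mulVec x) := by field_simp

/-- The infimum defining `sigmaMinPosSq` ranges over a compact set of unit vectors, which is
nonempty because `B ≠ 0`, so it is attained; the minimizer is not in `ker B`. -/
lemma sigmaMinPosSq_pos {s d : ℕ} (B : Matrix (Fin s) (Fin d) ℝ) (hB : B ≠ 0) :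
    0 < sigmaMinPosSq B := by
  let S : Set (Fin d → ℝ) := {x | (∀ y, B.mulVec y = 0 → x ⬝ᵥ y = 0) ∧ sqnorm x = 1}
  have hclosed : IsClosed S := by
    have hS : S = {x | ∀ y, B.mulVec y = 0 → x ⬝ᵥ y = 0} ∩ {x | sqnorm x = 1} := rfl
    rw [hS]
    refine IsClosed.inter ?_ (isClosed_eq continuous_sqnorm continuous_const)
    have : {x : Fin d → ℝ | ∀ y, B.mulVec y = 0 → x ⬝ᵥ y = 0}
        = ⋂ y, ⋂ _ : B.mulVec y = 0, {x | x ⬝ᵥ y = 0} := by ext; simp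
    rw [this]
    refine isClosed_iInter fun y => isClosed_iInter fun _ => isClosed_eq ?_ continuous_const
    unfold dotProduct
    fun_prop
  have hbdd : Bornology.IsBounded S := by
    refine (Metric.isBounded_closedBall (x := (0 : Fin d → ℝ)) (r := 1)).subset fun x hx => ?_
    rw [mem_closedBall_zero_iff, pi_norm_le_iff_of_nonneg zero_le_one]
    intro i
    have h1 : x i ^ 2 ≤ 1 := by
      rw [← hx.2]
      exact Finset.single_le_sum (f := fun i => x i ^ 2) (fun i _ => sq_nonneg _)
        (Finset.mem_univ i)
    rw [Real.norm_eq_abs]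
    exact (sq_le_one_iff_abs_le_one _).1 h1
  have hcpt : IsCompact S := Metric.isCompact_of_isClosed_isBounded hclosed hbdd
  have hne : S.Nonempty := by
    obtain ⟨z, hz⟩ : ∃ z, B.mulVec z ≠ 0 := by
      by_contra! h
      exact hB (Matrix.ext_of_mulVec_single fun i => by rw [h, zero_mulVec])
    obtain ⟨w, hw, r, rfl, hr⟩ := exists_dotProduct_decomp (LinearMap.ker B.mulVecLin) z
    have hw' : B.mulVec w = 0 := by simpa using hw
    have hr0 : r ≠ 0 := by
      rintro rfl
      simp [hw'] at hz
    refine ⟨_, fun y hy => ?_, exists_unit_scaling hr0⟩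
    rw [smul_dotProduct, hr y (by simpa using hy), smul_zero]
  obtain ⟨x, hx, hmin⟩ := hcpt.exists_isMinOn hne
    (f := fun x => sqnorm (B.mulVec x))
    (continuous_sqnorm.comp (Continuous.matrix_mulVec continuous_const continuous_id)).continuousOn
  have hBx : B.mulVec x ≠ 0 := by
    intro h
    have := hx.1 x h
    rw [← sqnorm_eq_dotProduct, hx.2] at this
    exact one_ne_zero this
  have hpos : 0 < sqnorm (B.mulVec x) :=
    lt_of_le_of_ne (sqnorm_nonneg _) fun h => hBx (sqnorm_eq_zero.1 h.symm)
  refine hpos.trans_le (le_csInf ⟨_, x, hx.1, hx.2, rfl⟩ ?_)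
  rintro _ ⟨z, hz1, hz2, rfl⟩
  exact hmin (show z ∈ S from ⟨hz1, hz2⟩)

/-- Every vector of `(ker B)ᗮ` is the image under `Bᵀ B` of a vector of `(ker B)ᗮ`. -/
lemma exists_gram_preimage {s d : ℕ} (B : Matrix (Fin s) (Fin d) ℝ) (g : Fin d → ℝ)
    (hg : ∀ y, B.mulVec y = 0 → g ⬝ᵥ y = 0) :
    ∃ x : Fin d → ℝ, (∀ y, B.mulVec y = 0 → x ⬝ᵥ y = 0) ∧ Bᵀ.mulVec (B.mulVec x) = g := by
  obtain ⟨w, ⟨z, rfl⟩, r, rfl, hr⟩ :=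
    exists_dotProduct_decomp (LinearMap.range (Bᵀ * B).mulVecLin) g
  have key : ∀ a c : Fin d → ℝ, a ⬝ᵥ (Bᵀ * B).mulVec c = B.mulVec a ⬝ᵥ B.mulVec c := by
    intro a c
    rw [← mulVec_mulVec, dotProduct_mulVec, vecMul_transpose]
  have hBr : B.mulVec r = 0 := by
    have := hr _ ⟨r, rfl⟩
    rwa [mulVecLin_apply, key, dotProduct_self_eq_zero] at this
  have hr0 : r = 0 := by
    have h1 := hg r hBr
    rw [add_dotProduct, dotProduct_comm, hr _ ⟨z, rfl⟩, zero_add, dotProduct_self_eq_zero] at h1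
    exact h1
  obtain ⟨k, hk, x, rfl, hx⟩ := exists_dotProduct_decomp (LinearMap.ker B.mulVecLin) z
  have hk' : B.mulVec k = 0 := by simpa using hk
  refine ⟨x, fun y hy => hx y (by simpa using hy), ?_⟩
  rw [hr0, add_zero, mulVecLin_apply, ← mulVec_mulVec, mulVec_add, hk', zero_add]

/-- First-order optimality: a minimizer over `{u | B u = b}` has a subgradient orthogonal to
`ker B`. It is the slope of a hyperplane separating the strict epigraph of `G` from the
horizontal flat through `(ustar, G ustar)` in the directions of `ker B`. -/
lemma exists_subgradient_orthogonal_ker {d s : ℕ} (G : (Fin d → ℝ) → ℝ)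
    (hG : ConvexOn ℝ Set.univ G) (B : Matrix (Fin s) (Fin d) ℝ) (ustar : Fin d → ℝ)
    (hmin : ∀ u, B.mulVec u = B.mulVec ustar → G ustar ≤ G u) :
    ∃ g : Fin d → ℝ, (∀ u, G ustar + g ⬝ᵥ (u - ustar) ≤ G u) ∧
      ∀ y, B.mulVec y = 0 → g ⬝ᵥ y = 0 := by
  have hcont : Continuous G :=
    continuousOn_univ.1 (hG.continuousOn isOpen_univ)
  let S : Set ((Fin d → ℝ) × ℝ) := {p | G p.1 < p.2}
  let T : Set ((Fin d → ℝ) × ℝ) := {p | B.mulVec p.1 = B.mulVec ustar ∧ p.2 = G ustar}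
  have hSo : IsOpen S := isOpen_lt (hcont.comp continuous_fst) continuous_snd
  have hSc : Convex ℝ S := by simpa [S] using hG.convex_strict_epigraph
  have hTc : Convex ℝ T := by
    rintro p ⟨hp1, hp2⟩ q ⟨hq1, hq2⟩ a c _ _ hac
    constructor
    · simp [mulVec_add, mulVec_smul, hp1, hq1, ← add_smul, hac]
    · simp [hp2, hq2, ← add_mul, hac]
  have hdisj : Disjoint S T := by
    rw [Set.disjoint_left]
    rintro p hp ⟨h1, h2⟩
    have := hmin p.1 h1
    have hp' : G p.1 < p.2 := hp
    linarith
  obtain ⟨f, α, hfS, hfT⟩ := geometric_hahn_banach_open hSc hSo hTc hdisj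
  let φ : (Fin d → ℝ) →ₗ[ℝ] ℝ := f.toLinearMap ∘ₗ LinearMap.inl ℝ _ _
  let c : ℝ := f (0, 1)
  have hf : ∀ u t, f (u, t) = φ u + t * c := by
    intro u t
    have : ((u, t) : (Fin d → ℝ) × ℝ) = (u, 0) + t • (0, 1) := by simp
    rw [this, map_add, map_smul]
    rfl
  have hα : α ≤ φ ustar + G ustar * c := by
    rw [← hf]
    exact hfT _ ⟨rfl, rfl⟩
  have hc : c < 0 := by
    have h := hfS (ustar, G ustar + 1) (show G ustar < G ustar + 1 by linarith)
    rw [hf] at h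
    linarith
  have hsupp : ∀ u, φ u + G u * c ≤ α := by
    intro u
    refine le_of_forall_pos_le_add fun ε hε => ?_
    have h := hfS (u, G u + ε / (-c)) (show G u < _ by
      have : 0 < ε / (-c) := div_pos hε (by linarith)
      linarith)
    rw [hf] at h
    have h2 : ε / (-c) * c = -ε := by rw [div_neg, neg_mul, div_mul_cancel₀ _ hc.ne]
    nlinarith
  -- A linear functional bounded below on the subspace `ker B` vanishes there.
  have hker : ∀ y, B.mulVec y = 0 → φ y = 0 := by
    intro y hy
    have hbd : ∀ t : ℝ, α ≤ φ ustar + t * φ y + G ustar * c := by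
      intro t
      have h := hfT (ustar + t • y, G ustar) ⟨by simp [mulVec_add, mulVec_smul, hy], rfl⟩
      rw [hf, map_add, map_smul, smul_eq_mul] at h
      exact h
    by_contra hne
    have h := hbd ((α - φ ustar - G ustar * c - 1) / φ y)
    rw [div_mul_cancel₀ _ hne] at h
    linarith
  let g : Fin d → ℝ := fun i => φ (Pi.single i 1) / (-c)
  have hg : ∀ y, g ⬝ᵥ y = φ y / (-c) := by
    intro y
    rw [LinearMap.pi_apply_eq_sum_univ φ y, Finset.sum_div]
    refine Finset.sum_congr rfl fun i _ => ?_
    have : (fun j => if i = j then (1 : ℝ) else 0) = Pi.single i 1 := by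
      ext j; simp [Pi.single_apply, eq_comm]
    simp only [g, this, smul_eq_mul]
    ring
  refine ⟨g, fun u => ?_, fun y hy => by rw [hg, hker y hy, zero_div]⟩
  have h1 := hsupp u
  have h2 : φ (u - ustar) / (-c) ≤ G u - G ustar := by
    rw [div_le_iff₀ (by linarith), map_sub]
    linarith
  rw [hg]
  linarith

/-- existence of a bounded optimal dual multiplier. -/
theorem bounded_dual_multiplier {d s : ℕ}
    (G : (Fin d → ℝ) → ℝ) (hG_conv : ConvexOn ℝ Set.univ G)
    (M : ℝ) (hM : 0 < M)
    -- all subgradients of G are bounded in norm by M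
    (hsub : ∀ u g : Fin d → ℝ,
      (∀ u', G u + g ⬝ᵥ (u' - u) ≤ G u') → Real.sqrt (sqnorm g) ≤ M)
    (B : Matrix (Fin s) (Fin d) ℝ) (hB : B ≠ 0) (b : Fin s → ℝ)
    (hb : ∃ z : Fin d → ℝ, B.mulVec z = b)
    -- u* is a minimizer of G over {u : Bu = b}
    (ustar : Fin d → ℝ) (hustar_feas : B.mulVec ustar = b)
    (hustar_min : ∀ u, B.mulVec u = b → G ustar ≤ G u) :
    ∃ vstar : Fin s → ℝ,
      Real.sqrt (sqnorm vstar) ≤ M / Real.sqrt (sigmaMinPosSq B) ∧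
      ∀ u, G ustar ≤ G u + vstar ⬝ᵥ (B.mulVec u - b) := by
  obtain ⟨g, hgsub, hgker⟩ := exists_subgradient_orthogonal_ker G hG_conv B ustar
    fun u hu => hustar_min u (hu.trans hustar_feas)
  have hgM : Real.sqrt (sqnorm g) ≤ M := hsub ustar g hgsub
  obtain ⟨x, hxker, hxg⟩ := exists_gram_preimage B g hgker
  have hσ := sigmaMinPosSq_pos B hB
  have hpair : ∀ y, B.mulVec x ⬝ᵥ B.mulVec y = g ⬝ᵥ y := by
    intro y
    rw [← hxg, dotProduct_mulVec, mulVec_transpose]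
  refine ⟨-B.mulVec x, ?_, fun u => ?_⟩
  · have hv : sqnorm (-B.mulVec x) = sqnorm (B.mulVec x) := by simp [sqnorm]
    rw [hv, le_div_iff₀ (Real.sqrt_pos.2 hσ), ← Real.sqrt_mul (sqnorm_nonneg _)]
    refine (Real.sqrt_le_sqrt ?_).trans hgM
    -- Cauchy–Schwarz for `‖B x‖² = ⟨g, x⟩`, combined with `σ² ‖x‖² ≤ ‖B x‖²`.
    have hcs : sqnorm (B.mulVec x) ^ 2 ≤ sqnorm g * sqnorm x := by
      rw [sqnorm_eq_dotProduct (B.mulVec x), hpair]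
      exact Finset.sum_mul_sq_le_sq_mul_sq _ _ _
    have hsx := sigmaMinPosSq_mul_le B x hxker
    rcases (sqnorm_nonneg (B.mulVec x)).eq_or_lt with h0 | hpos
    · rw [← h0, zero_mul]
      exact sqnorm_nonneg g
    · refine le_of_mul_le_mul_right ?_ hpos
      calc sqnorm (B.mulVec x) * sigmaMinPosSq B * sqnorm (B.mulVec x)
          = sigmaMinPosSq B * sqnorm (B.mulVec x) ^ 2 := by ring
        _ ≤ sigmaMinPosSq B * (sqnorm g * sqnorm x) := by gcongr
        _ = sqnorm g * (sigmaMinPosSq B * sqnorm x) := by ring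
        _ ≤ sqnorm g * sqnorm (B.mulVec x) :=
          mul_le_mul_of_nonneg_left hsx (sqnorm_nonneg g)
  · have h := hgsub u
    rw [← hustar_feas, ← mulVec_sub, neg_dotProduct, hpair]
    linarith
end
end
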